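/- Assume p^2·e_0 − (p+1)·b_2 + (p−1)·b_1 > 0. Then π_0^{d_0 − d_j}·Ψ^{(j)}·ρ_r ∈ 𝔐_2 whenever 0 ≤ r, j < p^2 and r + j ≥ p^2. -/

import Mathlib

/-- A normalized discrete valuation on a field `K`, recorded as a function
`v : K → ℤ`.  The value of `v` at `0` is irrelevant: all conditions below only
refer to nonzero elements (the convention `v 0 = ∞` being understood). -/
structure IsDiscVal {K : Type*} [Field K] (v : K → ℤ) : Prop where
  map_one : v 1 = 0
  map_mul : ∀ x y : K, x ≠ 0 → y ≠ 0 → v (x * y) = v x + v y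
  min_le_add : ∀ x y : K, x ≠ 0 → y ≠ 0 → x + y ≠ 0 → min (v x) (v y) ≤ v (x + y)
  exists_uniformizer : ∃ π : K, π ≠ 0 ∧ v π = 1

/-!
The element `Y = x₂ - μ x₁` has valuation `-b₂`, which is prime to `p`. Since the extension is
totally ramified, the terms of an expansion in powers of `Y` have distinct valuations, so
`σ - 1` raises every valuation by at least as much as it raises that of `Y`; this gives `b₁` for
`σ` and `b₂` for `σ ^ p`.

Because `σ ^ (p ^ 2) = 1`, the binomial expansion shows that `Ψ₂ ^ p` and `Ψ₁ ^ p - Ψ₂` gain a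
factor `p`, up to controlled terms. If `i + j ≥ p ^ 2`, then adding the digits of `i` and `j`
forces `Ψ^(i) Ψ^(j)` to contain `Ψ₂ ^ p` or `Ψ₂ ^ (p - 1) Ψ₁ ^ p`, and the inequality relating
`e₀`, `b₁` and `b₂` says that the valuation `p ^ 2 e₀` of `p` outweighs what this factor would
otherwise have contributed.
-/

section Filtration

variable {R : Type*} [Ring R] {A : ℤ → AddSubgroup R} [SetLike.GradedMonoid A]

theorem pow_mem_filtration {x : R} {n : ℤ} (hx : x ∈ A n) (k : ℕ) : x ^ k ∈ A (k * n) := by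
  simpa using SetLike.pow_mem_graded k hx

theorem geom_sum_mem_filtration {x : R} (hx : x ∈ A 0) (k : ℕ) :
    ∑ i ∈ Finset.range k, x ^ i ∈ A 0 :=
  sum_mem fun i _ => by simpa using pow_mem_filtration hx i

theorem mem_zero_of_sub_one_mem {x : R} {n : ℤ} (hA : Antitone A) (hn : 0 ≤ n) (hx : x - 1 ∈ A n) :
    x ∈ A 0 := by
  simpa using add_mem (hA hn hx) (SetLike.one_mem_graded A)

theorem pow_sub_one_mem_filtration {x : R} {n : ℤ} (hA : Antitone A) (hn : 0 ≤ n)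
    (hx : x - 1 ∈ A n) (k : ℕ) : x ^ k - 1 ∈ A n := by
  have hgeom := geom_sum_mem_filtration (mem_zero_of_sub_one_mem hA hn hx) k
  rw [← geom_sum_mul]
  simpa using SetLike.mul_mem_graded hgeom hx

/-- The Witt polynomial `D(x, y) = (x ^ p + y ^ p - (x + y) ^ p) / p`, written with its integer
coefficients so that it makes sense in every ring. -/
def wittD (p : ℕ) (x y : R) : R :=
  -∑ k ∈ Finset.Ioo 0 p, x ^ k * y ^ (p - k) * ((p.choose k / p : ℕ) : R)

theorem add_pow_eq_sub_wittD {p : ℕ} (hp : p.Prime) {x y : R} (h : Commute x y) :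
    (x + y) ^ p = x ^ p + y ^ p - p * wittD p x y := by
  rw [h.add_pow_prime_eq' hp, wittD, mul_neg, sub_neg_eq_add]

theorem wittD_eq_div {K : Type*} [Field K] [CharZero K] {p : ℕ} (hp : p.Prime) (x y : K) :
    (x ^ p + y ^ p - (x + y) ^ p) / p = wittD p x y := by
  have hp0 : (p : K) ≠ 0 := by exact_mod_cast hp.ne_zero
  rw [add_pow_eq_sub_wittD hp (Commute.all x y), sub_sub_cancel, mul_div_cancel_left₀ _ hp0]

theorem wittD_mem {p : ℕ} (hA : Antitone A) {x y : R} {a b c : ℤ} (hx : x ∈ A a) (hy : y ∈ A b)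
    (h₁ : c ≤ a + (p - 1) * b) (h₂ : c ≤ (p - 1) * a + b) : wittD p x y ∈ A c := by
  refine neg_mem (sum_mem fun k hk => ?_)
  obtain ⟨hk0, hkp⟩ := Finset.mem_Ioo.mp hk
  refine hA ?_ (SetLike.mul_mem_graded (SetLike.mul_mem_graded (pow_mem_filtration hx k)
    (pow_mem_filtration hy (p - k))) (SetLike.natCast_mem_graded A _))
  have hk0' : (1 : ℤ) ≤ k := by exact_mod_cast hk0
  have hkp' : (k : ℤ) + 1 ≤ p := by exact_mod_cast hkp
  push_cast [hkp.le]
  rcases le_total a b with hab | hab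
  · nlinarith [mul_nonneg (sub_nonneg.mpr hkp') (sub_nonneg.mpr hab)]
  · nlinarith [mul_nonneg (sub_nonneg.mpr hk0') (sub_nonneg.mpr hab)]

theorem one_add_pow_sub_mem {p : ℕ} (hp : p.Prime) (hA : Antitone A) {e n : ℤ}
    (hpe : (p : R) ∈ A e) (hn : 0 ≤ n) {x : R} (hx : x ∈ A n) :
    (1 + x) ^ p - 1 - x ^ p ∈ A (e + n) := by
  have hp2 : (2 : ℤ) ≤ p := by exact_mod_cast hp.two_le
  have hD : wittD p 1 x ∈ A n :=
    wittD_mem hA (SetLike.one_mem_graded A) hx (by nlinarith) (by linarith)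
  rw [add_pow_eq_sub_wittD hp (Commute.one_left x), one_pow,
    show 1 + x ^ p - p * wittD p 1 x - 1 - x ^ p = -(p * wittD p 1 x) by abel]
  exact neg_mem (SetLike.mul_mem_graded hpe hD)

theorem pow_mem_of_one_add_pow_eq_one {p : ℕ} (hp : p.Prime) (hA : Antitone A) {e n : ℤ}
    (hpe : (p : R) ∈ A e) (hn : 0 ≤ n) {x : R} (hx : x ∈ A n) (h : (1 + x) ^ p = 1) :
    x ^ p ∈ A (e + n) := by
  have hmem := one_add_pow_sub_mem hp hA hpe hn hx
  rw [h, sub_self, zero_sub] at hmem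
  exact neg_mem_iff.mp hmem

theorem mul_sub_one_mem {x y : R} {n : ℤ} (hA : Antitone A) (hn : 0 ≤ n) (hx : x - 1 ∈ A n)
    (hy : y - 1 ∈ A n) : x * y - 1 ∈ A n := by
  have hxy := SetLike.mul_mem_graded hx (mem_zero_of_sub_one_mem hA hn hy)
  rw [add_zero, sub_one_mul] at hxy
  simpa using add_mem hxy hy

theorem mul_sub_one_pow_sub_mem {p : ℕ} (hp : p.Prime) (hA : Antitone A) {e n : ℤ}
    (hpe : (p : R) ∈ A e) (hn : 0 ≤ n) {x y : R} (hxy : Commute x y) (hx : x - 1 ∈ A n)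
    (hy : y - 1 ∈ A n) :
    (x * y - 1) ^ p - (x ^ p - 1) - x ^ p * (y - 1) ^ p ∈ A (e + n) := by
  have hprod := one_add_pow_sub_mem hp hA hpe hn (mul_sub_one_mem hA hn hx hy)
  have hright := one_add_pow_sub_mem hp hA hpe hn hy
  have hpow := SetLike.mul_mem_graded (pow_mem_filtration (mem_zero_of_sub_one_mem hA hn hx) p)
    hright
  rw [mul_zero, zero_add] at hpow
  have hdiff := sub_mem hpow hprod
  rw [add_sub_cancel, add_sub_cancel, hxy.mul_pow, mul_sub, mul_sub, mul_one] at hdiff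
  convert hdiff using 1
  abel

end Filtration

theorem choose_eq_prod_div_factorial {K : Type*} [Field K] [CharZero K] (x : K) (n : ℕ) :
    Ring.choose x n = (∏ k ∈ Finset.range n, (x - k)) / n.factorial := by
  have h := Ring.descPochhammer_eq_factorial_smul_choose x n
  rw [← Polynomial.aeval_eq_smeval, nsmul_eq_mul] at h
  rw [eq_div_iff (by exact_mod_cast n.factorial_ne_zero), mul_comm, ← h,
    Polynomial.aeval_def, Polynomial.eval₂_eq_eval_map, descPochhammer_map]
  exact descPochhammer_eval_eq_prod_range n x

section Raising

variable (F : Type*) {M : Type*} [CommRing F] [AddCommGroup M] [Module F M]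

/-- The endomorphisms of a filtered module that raise the filtration by at least `n`. -/
def raising (A : ℤ → AddSubgroup M) (n : ℤ) : AddSubgroup (Module.End F M) where
  carrier := {T | ∀ t, ∀ x ∈ A t, T x ∈ A (t + n)}
  zero_mem' _ _ _ := zero_mem _
  add_mem' hS hT t x hx := add_mem (hS t x hx) (hT t x hx)
  neg_mem' hT t x hx := neg_mem (hT t x hx)

variable {F} {A : ℤ → AddSubgroup M}

instance : SetLike.GradedMonoid (raising F A) where
  one_mem t x hx := by simpa using hx
  mul_mem i j S T hS hT t x hx := by
    rw [add_comm i j, ← add_assoc]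
    exact hS _ _ (hT _ _ hx)

theorem raising_antitone (hA : Antitone A) : Antitone (raising F A) :=
  fun _ _ h _ hT t x hx => hA (by linarith) (hT t x hx)

theorem algebraMap_mem_raising {K : Type*} [Ring K] [Algebra F K] {A : ℤ → AddSubgroup K}
    [SetLike.GradedMonoid A] {n : ℤ} {c : F} (hc : algebraMap F K c ∈ A n) :
    algebraMap F (Module.End F K) c ∈ raising F A n := fun t x hx => by
  rw [Module.algebraMap_end_apply, Algebra.smul_def, add_comm]
  exact SetLike.mul_mem_graded hc hx

theorem natCast_mem_raising {K : Type*} [Ring K] [Algebra F K] {A : ℤ → AddSubgroup K}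
    [SetLike.GradedMonoid A] {n : ℤ} {k : ℕ} (hk : (k : K) ∈ A n) :
    (k : Module.End F K) ∈ raising F A n := by
  simpa only [map_natCast] using algebraMap_mem_raising (F := F) (c := k) (by rwa [map_natCast])

theorem pow_apply_sub_sub_mem {T : Module.End F M} (hT : T ∈ raising F A 0) {t : ℤ} {x c : M}
    (hc : T c = c) (hx : T x - x - c ∈ A t) (n : ℕ) : (T ^ n) x - x - n • c ∈ A t := by
  have hpow : ∀ i : ℕ, (T ^ i) c = c := fun i => by
    rw [Module.End.pow_apply]
    exact Function.iterate_fixed hc i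
  have hgeom : (∑ i ∈ Finset.range n, T ^ i) (T x - x - c) = (T ^ n) x - x - n • c := by
    have h := LinearMap.congr_fun (geom_sum_mul T n) x
    simp only [Module.End.mul_apply, LinearMap.sub_apply, Module.End.one_apply] at h
    rw [map_sub, h, LinearMap.sum_apply, Finset.sum_congr rfl fun i _ => hpow i, Finset.sum_const,
      Finset.card_range]
  rw [← hgeom]
  simpa using geom_sum_mem_filtration hT n t _ hx

end Raising

theorem toLinearMap_pow_finrank_eq_one {F K : Type*} [Field F] [Field K] [Algebra F K]
    [IsGalois F K] [FiniteDimensional F K] (σ : K ≃ₐ[F] K) :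
    (σ.toLinearMap : Module.End F K) ^ Module.finrank F K = 1 := by
  rw [← AlgEquiv.pow_toLinearMap, ← IsGalois.card_aut_eq_finrank, pow_card_eq_one']
  rfl

namespace IsDiscVal

section Valuation

variable {K : Type*} [Field K] {v : K → ℤ}

theorem map_neg_one (hv : IsDiscVal v) : v (-1) = 0 := by
  have h := hv.map_mul (-1) (-1) (by simp) (by simp)
  rw [neg_mul_neg, one_mul, hv.map_one] at h
  omega

protected theorem map_neg (hv : IsDiscVal v) {x : K} (hx : x ≠ 0) : v (-x) = v x := by
  rw [← neg_one_mul, hv.map_mul _ _ (by simp) hx, hv.map_neg_one, zero_add]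

protected theorem map_pow (hv : IsDiscVal v) {x : K} (hx : x ≠ 0) (n : ℕ) :
    v (x ^ n) = n * v x := by
  induction n with
  | zero => simp [hv.map_one]
  | succ n ih =>
    rw [pow_succ, hv.map_mul _ _ (pow_ne_zero n hx) hx, ih]
    push_cast
    ring

protected theorem map_inv (hv : IsDiscVal v) {x : K} (hx : x ≠ 0) : v x⁻¹ = -v x := by
  have h := hv.map_mul x x⁻¹ hx (inv_ne_zero hx)
  rw [mul_inv_cancel₀ hx, hv.map_one] at h
  omega

protected theorem map_zpow (hv : IsDiscVal v) {x : K} (hx : x ≠ 0) (n : ℤ) :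
    v (x ^ n) = n * v x := by
  cases n with
  | ofNat n => simpa using hv.map_pow hx n
  | negSucc n =>
    rw [zpow_negSucc, hv.map_inv (pow_ne_zero _ hx), hv.map_pow hx, Int.negSucc_eq]
    push_cast
    ring

/-- The fractional ideal `{x | n ≤ v x}`. The disjunct `x = 0` encodes `v 0 = ∞`. -/
def fracIdeal (hv : IsDiscVal v) (n : ℤ) : AddSubgroup K where
  carrier := {x | x = 0 ∨ n ≤ v x}
  zero_mem' := Or.inl rfl
  add_mem' {x y} hx hy := by
    rcases eq_or_ne x 0 with rfl | hx0
    · rwa [zero_add]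
    rcases eq_or_ne y 0 with rfl | hy0
    · rwa [add_zero]
    refine or_iff_not_imp_left.mpr fun h => ?_
    exact (le_min (hx.resolve_left hx0) (hy.resolve_left hy0)).trans (hv.min_le_add x y hx0 hy0 h)
  neg_mem' {x} hx := by
    rcases eq_or_ne x 0 with rfl | hx0
    · exact Or.inl neg_zero
    · exact Or.inr ((hx.resolve_left hx0).trans_eq (hv.map_neg hx0).symm)

variable {hv : IsDiscVal v}

theorem mem_fracIdeal_iff_le {n : ℤ} {x : K} (hx : x ≠ 0) : x ∈ hv.fracIdeal n ↔ n ≤ v x :=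
  or_iff_right hx

theorem mem_fracIdeal_self (x : K) : x ∈ hv.fracIdeal (v x) := Or.inr le_rfl

theorem fracIdeal_antitone : Antitone hv.fracIdeal := fun _ _ h _ hx => hx.imp_right h.trans

instance : SetLike.GradedMonoid hv.fracIdeal where
  one_mem := Or.inr hv.map_one.ge
  mul_mem i j x y hx hy := by
    rcases eq_or_ne x 0 with rfl | hx0
    · exact Or.inl (zero_mul y)
    rcases eq_or_ne y 0 with rfl | hy0
    · exact Or.inl (mul_zero x)
    exact Or.inr (by
      rw [hv.map_mul x y hx0 hy0]
      exact add_le_add (hx.resolve_left hx0) (hy.resolve_left hy0))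

theorem inv_mem_fracIdeal (x : K) : x⁻¹ ∈ hv.fracIdeal (-v x) := by
  rcases eq_or_ne x 0 with rfl | hx
  · exact Or.inl inv_zero
  · exact Or.inr (hv.map_inv hx).ge

theorem add_ne_zero_of_mem_fracIdeal {x y : K} (hx : x ≠ 0) (hy : y ∈ hv.fracIdeal (v x + 1)) :
    x + y ≠ 0 := by
  intro h
  have hxy := hy.resolve_left fun hy0 => hx (by rwa [hy0, add_zero] at h)
  rw [eq_neg_of_add_eq_zero_right h, hv.map_neg hx] at hxy
  omega

theorem map_add_eq_of_mem_fracIdeal {x y : K} (hx : x ≠ 0) (hy : y ∈ hv.fracIdeal (v x + 1)) :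
    v (x + y) = v x := by
  have hxy := add_ne_zero_of_mem_fracIdeal hx hy
  have hle : v x ≤ v (x + y) := (mem_fracIdeal_iff_le hxy).mp
    (add_mem (mem_fracIdeal_self x) (fracIdeal_antitone (by omega) hy))
  by_contra hne
  have hmem : x + y - y ∈ hv.fracIdeal (v x + 1) :=
    sub_mem ((mem_fracIdeal_iff_le hxy).mpr (by omega)) hy
  rw [add_sub_cancel_right, mem_fracIdeal_iff_le hx] at hmem
  omega

theorem mem_fracIdeal_of_sum_mem {ι : Type*} {s : Finset ι} {f : ι → K} {n : ℤ}
    (hf : ∀ i ∈ s, ∀ j ∈ s, f i ≠ 0 → f j ≠ 0 → v (f i) = v (f j) → i = j)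
    (hsum : ∑ i ∈ s, f i ∈ hv.fracIdeal n) {i : ι} (hi : i ∈ s) : f i ∈ hv.fracIdeal n := by
  classical
  rcases eq_or_ne (f i) 0 with hi0 | hi0
  · exact hi0 ▸ zero_mem _
  obtain ⟨j, hj, hmin⟩ := (s.filter (f · ≠ 0)).exists_min_image (fun j => v (f j))
    ⟨i, Finset.mem_filter.mpr ⟨hi, hi0⟩⟩
  obtain ⟨hjs, hj0⟩ := Finset.mem_filter.mp hj
  have hrest : ∑ k ∈ s.erase j, f k ∈ hv.fracIdeal (v (f j) + 1) := by
    refine sum_mem fun k hk => or_iff_not_imp_left.mpr fun hk0 => ?_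
    obtain ⟨hkj, hks⟩ := Finset.mem_erase.mp hk
    have hle := hmin k (Finset.mem_filter.mpr ⟨hks, hk0⟩)
    have hne : v (f j) ≠ v (f k) := fun h => hkj (hf k hks j hjs hk0 hj0 h.symm)
    omega
  rw [← Finset.add_sum_erase s f hjs,
    mem_fracIdeal_iff_le (add_ne_zero_of_mem_fracIdeal hj0 hrest),
    map_add_eq_of_mem_fracIdeal hj0 hrest] at hsum
  exact Or.inr (hsum.trans (hmin i (Finset.mem_filter.mpr ⟨hi, hi0⟩)))

theorem inv_natCast_mem_fracIdeal {p k : ℕ} (hp : (p : K) ∈ hv.fracIdeal 1) (hk : k.Coprime p) :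
    (k : K)⁻¹ ∈ hv.fracIdeal 0 := by
  obtain ⟨u, w, huw⟩ := Nat.isCoprime_iff_coprime.mpr hk
  have huw' : (u * k : K) = 1 + -(w * p) := by
    rw [eq_add_neg_iff_add_eq]
    exact_mod_cast congrArg (Int.cast : ℤ → K) huw
  have hwp : -(w * p : K) ∈ hv.fracIdeal (v 1 + 1) := by
    rw [hv.map_one]
    exact neg_mem (SetLike.mul_mem_graded (SetLike.intCast_mem_graded _ w) hp)
  have huk0 : (u * k : K) ≠ 0 := huw' ▸ add_ne_zero_of_mem_fracIdeal one_ne_zero hwp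
  have huk : v (u * k : K) = 0 := by
    rw [huw', map_add_eq_of_mem_fracIdeal one_ne_zero hwp, hv.map_one]
  have hk_inv : (k : K)⁻¹ = u * (u * k : K)⁻¹ := by
    field_simp [left_ne_zero_of_mul huk0, right_ne_zero_of_mul huk0]
  rw [hk_inv]
  simpa [huk] using SetLike.mul_mem_graded (SetLike.intCast_mem_graded hv.fracIdeal u)
    (inv_mem_fracIdeal (hv := hv) (u * k : K))

theorem choose_mem_fracIdeal [CharZero K] {p : ℕ} (hp : p.Prime) (hpv : (p : K) ∈ hv.fracIdeal 1)
    {n : ℤ} (hn : n ≤ 0) {x : K} (hx : x ∈ hv.fracIdeal n) {i : ℕ} (hi : i < p) :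
    Ring.choose x i ∈ hv.fracIdeal (i * n) := by
  rw [choose_eq_prod_div_factorial, div_eq_mul_inv]
  have hprod : ∏ k ∈ Finset.range i, (x - k) ∈ hv.fracIdeal (i * n) := by
    have h := SetLike.prod_mem_graded (A := hv.fracIdeal) (F := Finset.range i) (fun _ => n)
      (fun k : ℕ => x - k) fun k _ => sub_mem hx
        (fracIdeal_antitone hn (SetLike.natCast_mem_graded hv.fracIdeal k))
    simpa using h
  simpa using SetLike.mul_mem_graded hprod
    (inv_natCast_mem_fracIdeal hpv (hp.coprime_factorial_of_lt hi).symm)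

end Valuation

section ArtinSchreier

variable {K : Type*} [Field K] {v : K → ℤ} {hv : IsDiscVal v} {p : ℕ} {e : ℤ}

theorem map_eq_of_artinSchreier_shift (hp : p.Prime) (hpe : (p : K) ∈ hv.fracIdeal e) {n c : ℤ}
    (hn : n < 0) (hc0 : 0 ≤ c) (hc : p * c ≤ e) {x y z : K} (hx0 : x ≠ 0) (hx : v x = p * n)
    (hz : z ∈ hv.fracIdeal (n - c)) (h : (y + z) ^ p - z ^ p - y = x) :
    y ≠ 0 ∧ v y = n := by
  have hp2 : (2 : ℤ) ≤ p := by exact_mod_cast hp.two_le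
  have hexp : x = y ^ p + -(p * wittD p y z + y) := by
    rw [← h, add_pow_eq_sub_wittD hp (Commute.all y z)]
    ring
  have hy0 : y ≠ 0 := by
    rintro rfl
    exact hx0 (by rw [← h, zero_add, sub_self, sub_zero])
  refine ⟨hy0, ?_⟩
  rcases lt_trichotomy (v y) n with hlt | heq | hgt
  · have hD : wittD p y z ∈ hv.fracIdeal (p * v y + 1 - (p - 1) * c) :=
      wittD_mem fracIdeal_antitone (mem_fracIdeal_self y)
        (fracIdeal_antitone (show v y + 1 - c ≤ n - c by omega) hz) (by nlinarith) (by nlinarith)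
    have hrest : -(p * wittD p y z + y) ∈ hv.fracIdeal (v (y ^ p) + 1) := by
      rw [hv.map_pow hy0]
      exact neg_mem (add_mem (fracIdeal_antitone (by linarith) (SetLike.mul_mem_graded hpe hD))
        (fracIdeal_antitone (by nlinarith) (mem_fracIdeal_self y)))
    rw [hexp, map_add_eq_of_mem_fracIdeal (pow_ne_zero p hy0) hrest, hv.map_pow hy0] at hx
    exact mul_left_cancel₀ (by positivity) hx
  · exact heq
  · have hy : y ∈ hv.fracIdeal (n + 1) := fracIdeal_antitone hgt (mem_fracIdeal_self y)
    have hD : wittD p y z ∈ hv.fracIdeal (p * n + 1 - (p - 1) * c) :=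
      wittD_mem fracIdeal_antitone hy hz (by nlinarith) (by nlinarith)
    have hmem : x ∈ hv.fracIdeal (p * n + 1) := by
      rw [hexp]
      exact add_mem (fracIdeal_antitone (by nlinarith) (pow_mem_filtration hy p))
        (neg_mem (add_mem (fracIdeal_antitone (by linarith) (SetLike.mul_mem_graded hpe hD))
          (fracIdeal_antitone (by nlinarith) hy)))
    rw [mem_fracIdeal_iff_le hx0] at hmem
    omega

theorem map_eq_of_artinSchreier (hp : p.Prime) (hpe : (p : K) ∈ hv.fracIdeal e) (he : 0 ≤ e)
    {n : ℤ} (hn : n < 0) {x y : K} (hx0 : x ≠ 0) (hx : v x = p * n) (h : y ^ p - y = x) :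
    y ≠ 0 ∧ v y = n :=
  map_eq_of_artinSchreier_shift hp hpe hn le_rfl (by simpa using he) hx0 hx (zero_mem _)
    (by rw [add_zero, zero_pow hp.ne_zero, sub_zero, h])

theorem eq_of_artinSchreier_eq (hp : p.Prime) (hpe : (p : K) ∈ hv.fracIdeal e) {c : ℤ}
    (hc0 : 0 ≤ c) (hc : (p - 1) * c < e) {x y : K} (hx : x ∈ hv.fracIdeal (-c))
    (hxy : y - x ∈ hv.fracIdeal 1) (h : y ^ p - y = x ^ p - x) : y = x := by
  have hp2 : (2 : ℤ) ≤ p := by exact_mod_cast hp.two_le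
  obtain ⟨w, rfl⟩ : ∃ w, y = x + w := ⟨y - x, by ring⟩
  rw [add_sub_cancel_left] at hxy
  by_contra hne
  have hw0 : w ≠ 0 := fun hw0 => hne (by rw [hw0, add_zero])
  have hw1 : 1 ≤ v w := (mem_fracIdeal_iff_le hw0).mp hxy
  have hD : wittD p x w ∈ hv.fracIdeal (v w - (p - 1) * c) :=
    wittD_mem fracIdeal_antitone hx (mem_fracIdeal_self w) (by nlinarith) (by linarith)
  have hw : w = w ^ p - p * wittD p x w := by
    rw [add_pow_eq_sub_wittD hp (Commute.all x w)] at h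
    linear_combination -h
  have hmem : w ^ p - p * wittD p x w ∈ hv.fracIdeal (v w + 1) :=
    sub_mem (fracIdeal_antitone (by nlinarith) (pow_mem_filtration (mem_fracIdeal_self w) p))
      (fracIdeal_antitone (by linarith) (SetLike.mul_mem_graded hpe hD))
  rw [← hw, mem_fracIdeal_iff_le hw0] at hmem
  omega

end ArtinSchreier

section Generator

variable {F K : Type*} [Field F] [Field K] [Algebra F K] {v : K → ℤ} {hv : IsDiscVal v}
  {N : ℕ} {y : K}

theorem index_eq_of_map_smul_pow_eq
    (hv : IsDiscVal v) (hF : ∀ c : F, c ≠ 0 → (N : ℤ) ∣ v (algebraMap F K c)) (hy0 : y ≠ 0)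
    (hy : IsCoprime (v y) (N : ℤ)) {c d : F} {i j : ℕ} (hi : i < N) (hj : j < N)
    (hci : c • y ^ i ≠ 0) (hdj : d • y ^ j ≠ 0) (h : v (c • y ^ i) = v (d • y ^ j)) : i = j := by
  rw [Algebra.smul_def] at hci hdj h
  rw [Algebra.smul_def, hv.map_mul _ _ (left_ne_zero_of_mul hci) (right_ne_zero_of_mul hci),
    hv.map_mul _ _ (left_ne_zero_of_mul hdj) (right_ne_zero_of_mul hdj), hv.map_pow hy0,
    hv.map_pow hy0] at h
  have hmul : (N : ℤ) ∣ (j - i) * v y := by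
    have hsub := dvd_sub (hF c fun hc => hci (by simp [hc])) (hF d fun hd => hdj (by simp [hd]))
    rwa [show (j - i : ℤ) * v y = v (algebraMap F K c) - v (algebraMap F K d) by linarith]
  exact (Nat.modEq_iff_dvd.mpr (hy.symm.dvd_of_dvd_mul_right hmul)).eq_of_lt_of_lt hi hj

theorem linearIndependent_pow_of_isCoprime
    (hv : IsDiscVal v) (hF : ∀ c : F, c ≠ 0 → (N : ℤ) ∣ v (algebraMap F K c)) (hy0 : y ≠ 0)
    (hy : IsCoprime (v y) (N : ℤ)) : LinearIndependent F fun i : Fin N => y ^ (i : ℕ) := by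
  refine Fintype.linearIndependent_iff.mpr fun c hc i => ?_
  by_contra hci
  have hi0 : c i • y ^ (i : ℕ) ≠ 0 := smul_ne_zero hci (pow_ne_zero _ hy0)
  have hmem := mem_fracIdeal_of_sum_mem (hv := hv) (n := v (c i • y ^ (i : ℕ)) + 1)
    (fun j _ k _ hj hk hjk => Fin.ext (index_eq_of_map_smul_pow_eq hv hF hy0 hy j.2 k.2 hj hk hjk))
    (hc ▸ zero_mem _) (Finset.mem_univ i)
  rw [mem_fracIdeal_iff_le hi0] at hmem
  omega

theorem exists_sum_smul_pow_mem_fracIdeal [FiniteDimensional F K]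
    (hF : ∀ c : F, c ≠ 0 → (Module.finrank F K : ℤ) ∣ v (algebraMap F K c)) (hy0 : y ≠ 0)
    (hy : IsCoprime (v y) (Module.finrank F K : ℤ)) {n : ℤ} {x : K} (hx : x ∈ hv.fracIdeal n) :
    ∃ c : Fin (Module.finrank F K) → F, x = ∑ i, c i • y ^ (i : ℕ) ∧
      ∀ i, c i • y ^ (i : ℕ) ∈ hv.fracIdeal n := by
  have hspan := (linearIndependent_pow_of_isCoprime hv hF hy0 hy).span_eq_top_of_card_eq_finrank'
    (Fintype.card_fin _)
  obtain ⟨c, rfl⟩ :=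
    (Submodule.mem_span_range_iff_exists_fun F).mp (hspan ▸ Submodule.mem_top (x := x))
  exact ⟨c, rfl, fun i => mem_fracIdeal_of_sum_mem (fun j _ k _ hj hk hjk =>
    Fin.ext (index_eq_of_map_smul_pow_eq hv hF hy0 hy j.2 k.2 hj hk hjk)) hx (Finset.mem_univ i)⟩

theorem sub_one_mem_raising_of_isCoprime [FiniteDimensional F K]
    (hF : ∀ c : F, c ≠ 0 → (Module.finrank F K : ℤ) ∣ v (algebraMap F K c)) (hy0 : y ≠ 0)
    (hy : IsCoprime (v y) (Module.finrank F K : ℤ)) (σ : K ≃ₐ[F] K) {b : ℤ} (hb : 0 ≤ b)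
    (hσ : σ y - y ∈ hv.fracIdeal (v y + b)) :
    (σ.toLinearMap : Module.End F K) - 1 ∈ raising F hv.fracIdeal b := by
  have hu : σ y / y - 1 ∈ hv.fracIdeal b := by
    rw [div_sub_one hy0, div_eq_mul_inv]
    simpa using SetLike.mul_mem_graded hσ (inv_mem_fracIdeal (hv := hv) y)
  have hpow : ∀ i : ℕ, σ (y ^ i) - y ^ i = y ^ i * ((σ y / y) ^ i - 1) := fun i => by
    rw [map_pow, mul_sub_one, ← mul_pow, mul_div_cancel₀ _ hy0]
  intro t x hx
  obtain ⟨c, rfl, hc⟩ := exists_sum_smul_pow_mem_fracIdeal hF hy0 hy hx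
  have hexp : ((σ.toLinearMap : Module.End F K) - 1) (∑ i, c i • y ^ (i : ℕ)) =
      ∑ i, c i • y ^ (i : ℕ) * ((σ y / y) ^ (i : ℕ) - 1) := by
    simp only [map_sum, _root_.map_smul, LinearMap.sub_apply, AlgEquiv.toLinearMap_apply,
      Module.End.one_apply, hpow, smul_mul_assoc]
  rw [hexp]
  exact sum_mem fun i _ =>
    SetLike.mul_mem_graded (hc i) (pow_sub_one_mem_filtration fracIdeal_antitone hb hu i)

end Generator

section WittExtension

variable {K : Type*} [Field K] {v : K → ℤ} {hv : IsDiscVal v} {p : ℕ} {e b k : ℤ}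

theorem map_sub_mul_of_wittVector (hp : p.Prime) (hpe : (p : K) ∈ hv.fracIdeal e) (hb : 0 < b)
    (hbe : p * ((p - 1) * b) ≤ e) (hbk : p * ((p - 1) * b) < k) {x₁ x₂ a M : K} (ha0 : a ≠ 0)
    (ha : v a = -(p ^ 2 * b)) (hM0 : M ≠ 0) (hM : v M = -k) (hx₁ : x₁ ^ p - x₁ = a)
    (hx₂ : x₂ ^ p - x₂ = M ^ p * a + wittD p x₁ a) :
    x₂ - M * x₁ ≠ 0 ∧ v (x₂ - M * x₁) = -(k + b) := by
  have hp2 : (2 : ℤ) ≤ p := by exact_mod_cast hp.two_le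
  have hb' : 0 < (p - 1) * b := mul_pos (by linarith) hb
  have hpb' : 2 * ((p - 1) * b) ≤ p * ((p - 1) * b) := mul_le_mul_of_nonneg_right hp2 hb'.le
  have hpk : p * (p * ((p - 1) * b) + 1) ≤ p * k := mul_le_mul_of_nonneg_left hbk (by linarith)
  have hpk' : k + 1 ≤ p * k := by nlinarith
  obtain ⟨hx₁0, hvx₁⟩ := map_eq_of_artinSchreier hp hpe (by linarith) (n := -(p * b))
    (by nlinarith) ha0 (by rw [ha]; ring) hx₁
  have hmain0 : -(M ^ p * x₁) ≠ 0 := neg_ne_zero.mpr (mul_ne_zero (pow_ne_zero p hM0) hx₁0)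
  have hmain : v (-(M ^ p * x₁)) = p * -(k + b) := by
    rw [hv.map_neg (neg_ne_zero.mp hmain0), hv.map_mul _ _ (pow_ne_zero p hM0) hx₁0,
      hv.map_pow hM0, hM, hvx₁]
    ring
  have hD : wittD p x₁ a ∈ hv.fracIdeal (p * -(k + b) + 1) :=
    wittD_mem fracIdeal_antitone (mem_fracIdeal_self x₁) (mem_fracIdeal_self a)
      (by rw [hvx₁, ha]; linarith) (by rw [hvx₁, ha]; nlinarith)
  have hMx₁ : M * x₁ ∈ hv.fracIdeal (-k - p * b) := by
    have h := SetLike.mul_mem_graded (mem_fracIdeal_self (hv := hv) M) (mem_fracIdeal_self x₁)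
    rwa [hM, hvx₁, ← sub_eq_add_neg] at h
  have hrest : wittD p x₁ a + M * x₁ ∈ hv.fracIdeal (v (-(M ^ p * x₁)) + 1) := by
    rw [hmain]
    exact add_mem hD (fracIdeal_antitone (by linarith) hMx₁)
  refine map_eq_of_artinSchreier_shift hp hpe (c := (p - 1) * b) (by nlinarith) hb'.le hbe
    (add_ne_zero_of_mem_fracIdeal hmain0 hrest)
    ((map_add_eq_of_mem_fracIdeal hmain0 hrest).trans hmain)
    (fracIdeal_antitone (by linarith) hMx₁) ?_
  rw [sub_add_cancel, mul_pow]
  linear_combination hx₂ - M ^ p * hx₁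

variable {F : Type*} [Field F] [Algebra F K] {σ : K ≃ₐ[F] K} {x₁ x₂ ε δ : K} {c : ℤ}

theorem pow_apply_eq_self_of_artinSchreier (hp : p.Prime) (hpe : (p : K) ∈ hv.fracIdeal e)
    (hc0 : 0 ≤ c) (hc : (p - 1) * c < e) (hσ : σ.toLinearMap ∈ raising F hv.fracIdeal 0)
    (hx₁ : x₁ ∈ hv.fracIdeal (-c)) (ha : σ (x₁ ^ p - x₁) = x₁ ^ p - x₁)
    (hσx₁ : σ x₁ = x₁ + 1 + ε) (hε : ε ∈ hv.fracIdeal 1) : (σ ^ p) x₁ = x₁ := by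
  have hp2 : (2 : ℤ) ≤ p := by exact_mod_cast hp.two_le
  have he : 1 ≤ e := by nlinarith
  refine eq_of_artinSchreier_eq hp hpe hc0 hc hx₁ ?_ ?_
  · have hpow := pow_apply_sub_sub_mem hσ (_root_.map_one σ) (x := x₁) (t := 1)
      (by simpa [hσx₁, add_assoc] using hε) p
    rw [← AlgEquiv.pow_toLinearMap, AlgEquiv.toLinearMap_apply, nsmul_one] at hpow
    simpa using add_mem hpow (fracIdeal_antitone he hpe)
  · rw [← map_pow, ← map_sub, ← AlgEquiv.toLinearMap_apply, AlgEquiv.pow_toLinearMap,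
      Module.End.pow_apply]
    exact Function.iterate_fixed ha p

theorem pow_apply_sub_mem_of_wittVector [CharZero K] (hp : p.Prime) (hpe : v (p : K) = e)
    (hc0 : 0 < c) (hc : 2 * ((p - 1) * c) ≤ e) (hσ : σ.toLinearMap ∈ raising F hv.fracIdeal 0)
    (hx₁ : x₁ ∈ hv.fracIdeal (-c)) (ha : σ (x₁ ^ p - x₁) = x₁ ^ p - x₁)
    (hσx₁ : σ x₁ = x₁ + 1 + ε) (hε : ε ∈ hv.fracIdeal (e - (p - 1) * c))
    (hσx₂ : σ x₂ = x₂ + wittD p x₁ 1 + δ) (hδ : δ ∈ hv.fracIdeal 0) :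
    (σ ^ p) x₂ - x₂ ∈ hv.fracIdeal 0 := by
  have hp2 : (2 : ℤ) ≤ p := by exact_mod_cast hp.two_le
  have hp0 : (p : K) ≠ 0 := by exact_mod_cast hp.ne_zero
  have hc' : c ≤ (p - 1) * c := by nlinarith
  have hfix := pow_apply_eq_self_of_artinSchreier hp (mem_fracIdeal_iff_le hp0 |>.mpr hpe.ge)
    hc0.le (by linarith) hσ hx₁ ha hσx₁ (fracIdeal_antitone (by linarith) hε)
  have hD : wittD p (x₁ + 1) ε ∈ hv.fracIdeal 0 :=
    wittD_mem fracIdeal_antitone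
      (add_mem hx₁ (fracIdeal_antitone (by linarith) (SetLike.one_mem_graded hv.fracIdeal))) hε
      (by nlinarith) (by nlinarith)
  have hεp : ε ^ p * (p : K)⁻¹ ∈ hv.fracIdeal 0 :=
    fracIdeal_antitone (by nlinarith)
      (SetLike.mul_mem_graded (pow_mem_filtration hε p) (inv_mem_fracIdeal (p : K)))
  -- `x₂ + x₁ / p` is translated by `1 / p` up to an integral error, since
  -- `(x₁ + 1 + ε) ^ p = x₁ ^ p + 1 + ε`.
  have hshift : σ (x₂ + x₁ / p) - (x₂ + x₁ / p) - (p : K)⁻¹ =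
      ε ^ p * (p : K)⁻¹ - wittD p (x₁ + 1) ε + δ := by
    rw [map_sub, map_pow, hσx₁] at ha
    rw [map_add, map_div₀, map_natCast, hσx₁, hσx₂, ← wittD_eq_div hp, ← wittD_eq_div hp]
    field_simp
    linear_combination -ha
  have hpow := pow_apply_sub_sub_mem hσ (c := (p : K)⁻¹) (by simp)
    (hshift ▸ add_mem (sub_mem hεp hD) hδ) p
  rw [← AlgEquiv.pow_toLinearMap, AlgEquiv.toLinearMap_apply, map_add, map_div₀, hfix,
    map_natCast, nsmul_eq_mul, mul_inv_cancel₀ hp0] at hpow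
  simpa using add_mem hpow (SetLike.one_mem_graded hv.fracIdeal)

theorem apply_sub_mul_sub_mem (hp : p.Prime) (hc0 : 0 ≤ c) {μ : F}
    (hc : v (algebraMap F K μ) + (p - 1) * c ≤ 0) (hx₁ : x₁ ∈ hv.fracIdeal (-c))
    (hσx₁ : σ x₁ = x₁ + 1 + ε) (hε : ε ∈ hv.fracIdeal 0) (hσx₂ : σ x₂ = x₂ + wittD p x₁ 1 + δ)
    (hδ : δ ∈ hv.fracIdeal 0) :
    σ (x₂ - algebraMap F K μ * x₁) - (x₂ - algebraMap F K μ * x₁) ∈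
      hv.fracIdeal (v (algebraMap F K μ)) := by
  have hp2 : (2 : ℤ) ≤ p := by exact_mod_cast hp.two_le
  have hone := SetLike.one_mem_graded hv.fracIdeal
  have hD : wittD p x₁ 1 ∈ hv.fracIdeal (v (algebraMap F K μ)) :=
    wittD_mem fracIdeal_antitone hx₁ hone (by nlinarith) (by linarith)
  have hexp : σ (x₂ - algebraMap F K μ * x₁) - (x₂ - algebraMap F K μ * x₁) =
      wittD p x₁ 1 + δ - algebraMap F K μ * (1 + ε) := by
    rw [map_sub, _root_.map_mul, AlgEquiv.commutes, hσx₁, hσx₂]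
    ring
  rw [hexp]
  refine sub_mem (add_mem hD (fracIdeal_antitone (by nlinarith) hδ)) ?_
  simpa using SetLike.mul_mem_graded (mem_fracIdeal_self (algebraMap F K μ)) (add_mem hone hε)

theorem sub_one_mem_raising_of_wittVector [CharZero K] [FiniteDimensional F K] (hp : p.Prime)
    (hdeg : Module.finrank F K = p ^ 2)
    (hF : ∀ c : F, c ≠ 0 → (p ^ 2 : ℤ) ∣ v (algebraMap F K c)) (hpe : v (p : K) = e)
    (hb : 0 < b) (hpb : ¬(p : ℤ) ∣ b) (hbe : p * ((p ^ 2 - 1) * b) < e)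
    (hbk : (p ^ 2 - 1) * b < k) {a μ : F} (ha0 : a ≠ 0) (ha : v (algebraMap F K a) = -(p ^ 2 * b))
    (hμ0 : μ ≠ 0) (hμ : v (algebraMap F K μ) = -k) (hx₁ : x₁ ^ p - x₁ = algebraMap F K a)
    (hx₂ : x₂ ^ p - x₂ = algebraMap F K μ ^ p * algebraMap F K a + wittD p x₁ (algebraMap F K a))
    (hσx₁ : σ x₁ = x₁ + 1 + ε) (hε : ε ∈ hv.fracIdeal (e - (p - 1) * (p * b)))
    (hσx₂ : σ x₂ = x₂ + wittD p x₁ 1 + δ) (hδ : δ ∈ hv.fracIdeal 0) :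
    (σ.toLinearMap : Module.End F K) - 1 ∈ raising F hv.fracIdeal b ∧
      (σ.toLinearMap : Module.End F K) ^ p - 1 ∈ raising F hv.fracIdeal (k + b) := by
  have hp2 : (2 : ℤ) ≤ p := by exact_mod_cast hp.two_le
  have hp0 : (p : K) ≠ 0 := by exact_mod_cast hp.ne_zero
  have ha0' : algebraMap F K a ≠ 0 := by simpa using ha0
  have hpe' : (p : K) ∈ hv.fracIdeal e := (mem_fracIdeal_iff_le hp0).mpr hpe.ge
  have hb' : 0 < (p - 1) * b := mul_pos (by linarith) hb
  have hbe' : 2 * ((p - 1) * (p * b)) ≤ e := by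
    have h : 0 ≤ (p : ℤ) * ((p - 1) * ((p - 1) * b)) :=
      mul_nonneg (by linarith) (mul_nonneg (by linarith) hb'.le)
    nlinarith
  have hx₁mem : x₁ ∈ hv.fracIdeal (-(p * b)) := Or.inr (map_eq_of_artinSchreier hp hpe'
    (by nlinarith) (by nlinarith) ha0' (by rw [ha]; ring) hx₁).2.ge
  set y := x₂ - algebraMap F K μ * x₁ with hy
  obtain ⟨hy0, hvy⟩ : y ≠ 0 ∧ v y = -(k + b) := map_sub_mul_of_wittVector hp hpe' hb
    (by nlinarith) (by nlinarith) ha0' ha (by simpa using hμ0) hμ hx₁ hx₂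
  have hpk : (p : ℤ) ∣ k := by
    simpa [hμ] using (dvd_pow_self (p : ℤ) two_ne_zero).trans (hF μ hμ0)
  have hcop : IsCoprime (v y) (p ^ 2 : ℤ) := by
    rw [hvy, IsCoprime.neg_left_iff]
    exact ((Nat.prime_iff_prime_int.mp hp).coprime_iff_not_dvd.mpr
      ((Int.dvd_add_right hpk).not.mpr hpb)).symm.pow_right
  have hσy : σ y - y ∈ hv.fracIdeal (v y + b) := by
    rw [hvy, neg_add, neg_add_cancel_right, ← hμ]
    exact apply_sub_mul_sub_mem hp (by positivity) (by nlinarith) hx₁mem hσx₁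
      (fracIdeal_antitone (by nlinarith) hε) hσx₂ hδ
  have hσ := sub_one_mem_raising_of_isCoprime (by simpa [hdeg] using hF) hy0
    (by simpa [hdeg] using hcop) σ hb.le hσy
  have hfix := pow_apply_eq_self_of_artinSchreier hp hpe' (by positivity) (by nlinarith)
    (mem_zero_of_sub_one_mem (raising_antitone fracIdeal_antitone) hb.le hσ) hx₁mem
    (by simp [hx₁]) hσx₁ (fracIdeal_antitone (by nlinarith) hε)
  have hσpy : (σ ^ p) y - y = (σ ^ p) x₂ - x₂ := by
    rw [hy, map_sub, _root_.map_mul, AlgEquiv.commutes, hfix]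
    ring
  refine ⟨hσ, ?_⟩
  rw [← AlgEquiv.pow_toLinearMap]
  refine sub_one_mem_raising_of_isCoprime (by simpa [hdeg] using hF) hy0
    (by simpa [hdeg] using hcop) (σ ^ p) (by nlinarith) ?_
  rw [hσpy, hvy, neg_add_cancel]
  exact pow_apply_sub_mem_of_wittVector hp hpe (by positivity) hbe'
    (mem_zero_of_sub_one_mem (raising_antitone fracIdeal_antitone) hb.le hσ) hx₁mem
    (by simp [hx₁]) hσx₁ hε hσx₂ hδ

end WittExtension

end IsDiscVal

theorem le_digit_sum_of_sq_le_add {p i j : ℕ} (hp : 0 < p) (h : p ^ 2 ≤ i + j) :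
    p ≤ i / p + j / p ∨ i / p + j / p = p - 1 ∧ p ≤ i % p + j % p := by
  have hi := Nat.mod_lt i hp
  have hj := Nat.mod_lt j hp
  have hsum : p * p ≤ p * (i / p + j / p) + (i % p + j % p) := by
    linarith [Nat.div_add_mod i p, Nat.div_add_mod j p]
  rcases lt_trichotomy (i / p + j / p + 1) p with hlt | heq | hgt
  · have := Nat.mul_le_mul_left p (show i / p + j / p + 2 ≤ p from hlt)
    linarith
  · have : p * (i / p + j / p) + p = p * p := by rw [← Nat.mul_succ, Nat.succ_eq_add_one, heq]
    exact Or.inr ⟨by omega, by linarith⟩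
  · exact Or.inl (by omega)

section Scaffold

variable {F R : Type*} [Field F] [CharZero F] [Ring R] [Algebra F R]

/-- The truncated binomial series `∑ i < p, (μ choose i) Z ^ i`, the paper's
`(1 + Z) ^ [μ]`. -/
noncomputable def truncPow (p : ℕ) (μ : F) (Z : R) : R :=
  ∑ i ∈ Finset.range p, Ring.choose μ i • Z ^ i

/-- The scaffold operator `Ψ₂ = S ^ p - 1` attached to a generator `S` of a cyclic group of order
`p ^ 2`. -/
def scaffoldOp₂ (p : ℕ) (S : R) : R := S ^ p - 1

/-- The scaffold operator `Ψ₁ = S (1 + Ψ₂) ^ [μ] - 1`. -/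
noncomputable def scaffoldOp₁ (p : ℕ) (μ : F) (S : R) : R := S * truncPow p μ (scaffoldOp₂ p S) - 1

/-- The scaffold monomial `Ψ^(a) = Ψ₂ ^ a₁ * Ψ₁ ^ a₀`, where `a = a₀ + p a₁`. -/
noncomputable def scaffoldMonomial (p : ℕ) (μ : F) (S : R) (a : ℕ) : R :=
  scaffoldOp₂ p S ^ (a / p) * scaffoldOp₁ p μ S ^ (a % p)

/-- The paper's exponent `𝔟(a) = (1 + a₁) b₂ + a₀ p b₁`, where `a = a₀ + p a₁`. -/
def scaffoldExp (p : ℕ) (b₁ b₂ : ℤ) (a : ℕ) : ℤ :=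
  (1 + ((a / p : ℕ) : ℤ)) * b₂ + ((a % p : ℕ) : ℤ) * p * b₁

/-- The paper's exponent `d_a = ⌊𝔟(a) / p ^ 2⌋`. -/
def scaffoldFloor (p : ℕ) (b₁ b₂ : ℤ) (a : ℕ) : ℤ := scaffoldExp p b₁ b₂ a / p ^ 2

theorem sq_mul_scaffoldFloor_le {p : ℕ} (hp : 0 < p) (b₁ b₂ : ℤ) (a : ℕ) :
    (p : ℤ) ^ 2 * scaffoldFloor p b₁ b₂ a ≤ scaffoldExp p b₁ b₂ a :=
  Int.mul_ediv_self_le (by positivity)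

theorem commute_truncPow {x Z : R} (h : Commute x Z) (p : ℕ) (μ : F) :
    Commute x (truncPow p μ Z) :=
  Commute.sum_right _ _ _ fun i _ => (h.pow_right i).smul_right _

theorem commute_scaffoldOp₂ (p : ℕ) (S : R) : Commute S (scaffoldOp₂ p S) :=
  ((Commute.refl S).pow_right p).sub_right (Commute.one_right S)

theorem commute_scaffoldOp₁_scaffoldOp₂ (p : ℕ) (μ : F) (S : R) :
    Commute (scaffoldOp₁ p μ S) (scaffoldOp₂ p S) :=
  ((commute_scaffoldOp₂ p S).mul_left (commute_truncPow (Commute.refl _) p μ).symm).sub_left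
    (Commute.one_left _)

theorem scaffoldMonomial_mul (p : ℕ) (μ : F) (S : R) (i j : ℕ) :
    scaffoldMonomial p μ S i * scaffoldMonomial p μ S j =
      scaffoldOp₂ p S ^ (i / p + j / p) * scaffoldOp₁ p μ S ^ (i % p + j % p) := by
  have h := (commute_scaffoldOp₁_scaffoldOp₂ p μ S).pow_pow (i % p) (j / p)
  rw [scaffoldMonomial, scaffoldMonomial, h.mul_mul_mul_comm, ← pow_add, ← pow_add]

variable {A : ℤ → AddSubgroup R} [SetLike.GradedMonoid A] {p : ℕ} {μ : F} {b₁ b₂ e : ℤ}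

theorem exists_truncPow_eq_one_add_mul (hA : Antitone A) (hp : 0 < p) (hb₁ : 0 ≤ b₁) {Z : R}
    (hc : ∀ i < p, algebraMap F R (Ring.choose μ i) ∈ A (i * (b₁ - b₂))) (hZ : Z ∈ A b₂) :
    ∃ G ∈ A (b₁ - b₂), Commute Z G ∧ truncPow p μ Z = 1 + Z * G := by
  obtain ⟨k, rfl⟩ := Nat.exists_eq_succ_of_ne_zero hp.ne'
  refine ⟨∑ i ∈ Finset.range k, Ring.choose μ (i + 1) • Z ^ i, sum_mem fun i hi => ?_,
    Commute.sum_right _ _ _ fun i _ => ((Commute.refl Z).pow_right i).smul_right _, ?_⟩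
  · rw [Algebra.smul_def]
    refine hA ?_ (SetLike.mul_mem_graded (hc (i + 1) (by simpa using hi)) (pow_mem_filtration hZ i))
    push_cast
    nlinarith
  · simp only [truncPow, Finset.sum_range_succ', Finset.mul_sum, Ring.choose_zero_right, pow_zero,
      one_smul, mul_smul_comm, pow_succ']
    exact add_comm _ _

theorem truncPow_sub_one_mem (hA : Antitone A) (hp : 0 < p) (hb₁ : 0 ≤ b₁) {Z : R}
    (hc : ∀ i < p, algebraMap F R (Ring.choose μ i) ∈ A (i * (b₁ - b₂))) (hZ : Z ∈ A b₂) :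
    truncPow p μ Z - 1 ∈ A b₁ := by
  obtain ⟨G, hG, -, hE⟩ := exists_truncPow_eq_one_add_mul hA hp hb₁ hc hZ
  rw [hE, add_sub_cancel_left]
  simpa using SetLike.mul_mem_graded hZ hG

theorem truncPow_sub_one_pow_mem (hA : Antitone A) (hp : 0 < p) (hb₁ : 0 ≤ b₁) {Z : R}
    (hc : ∀ i < p, algebraMap F R (Ring.choose μ i) ∈ A (i * (b₁ - b₂))) (hZ : Z ∈ A b₂)
    {n : ℕ} {c : ℤ} (hZn : Z ^ n ∈ A c) :
    (truncPow p μ Z - 1) ^ n ∈ A (c + n * (b₁ - b₂)) := by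
  obtain ⟨G, hG, hZG, hE⟩ := exists_truncPow_eq_one_add_mul hA hp hb₁ hc hZ
  rw [hE, add_sub_cancel_left, hZG.mul_pow]
  exact SetLike.mul_mem_graded hZn (pow_mem_filtration hG n)

theorem scaffoldOp₁_mem (hA : Antitone A) (hp : 0 < p) (hb₁ : 0 ≤ b₁) {S : R}
    (hc : ∀ i < p, algebraMap F R (Ring.choose μ i) ∈ A (i * (b₁ - b₂)))
    (hS : S - 1 ∈ A b₁) (hS₂ : scaffoldOp₂ p S ∈ A b₂) : scaffoldOp₁ p μ S ∈ A b₁ :=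
  mul_sub_one_mem hA hb₁ hS (truncPow_sub_one_mem hA hp hb₁ hc hS₂)

theorem scaffoldOp₂_pow_mem (hp : p.Prime) (hA : Antitone A) (hpe : (p : R) ∈ A e) (hb₂ : 0 ≤ b₂)
    {S : R} (hS₂ : scaffoldOp₂ p S ∈ A b₂) (hord : S ^ p ^ 2 = 1) :
    scaffoldOp₂ p S ^ p ∈ A (e + b₂) :=
  pow_mem_of_one_add_pow_eq_one hp hA hpe hb₂ hS₂ (by
    rw [scaffoldOp₂, add_sub_cancel, ← pow_mul, ← pow_two, hord])

theorem scaffoldOp₂_pow_mul_scaffoldOp₁_pow_mem (hp : p.Prime) (hA : Antitone A)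
    (hpe : (p : R) ∈ A e) (hb₁ : 0 ≤ b₁) (hb₂ : 0 ≤ b₂) {S : R}
    (hc : ∀ i < p, algebraMap F R (Ring.choose μ i) ∈ A (i * (b₁ - b₂)))
    (hS : S - 1 ∈ A b₁) (hS₂ : scaffoldOp₂ p S ∈ A b₂) (hord : S ^ p ^ 2 = 1) :
    scaffoldOp₂ p S ^ (p - 1) * scaffoldOp₁ p μ S ^ p ∈ A e := by
  have hp1 : ((p - 1 : ℕ) : ℤ) = p - 1 := by rw [Nat.cast_pred hp.pos]
  set E := truncPow p μ (scaffoldOp₂ p S) with hE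
  have hZp := scaffoldOp₂_pow_mem hp hA hpe hb₂ hS₂ hord
  have hSp : S ^ p * (E - 1) ^ p ∈ A (0 + (e + b₂ + p * (b₁ - b₂))) :=
    SetLike.mul_mem_graded
      (mem_zero_of_sub_one_mem hA hb₁ (pow_sub_one_mem_filtration hA hb₁ hS p))
      (truncPow_sub_one_pow_mem hA hp.pos hb₁ hc hS₂ hZp)
  have hrem := mul_sub_one_pow_sub_mem hp hA hpe hb₁
    (commute_truncPow (commute_scaffoldOp₂ p S) p μ) hS (truncPow_sub_one_mem hA hp.pos hb₁ hc hS₂)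
  have hZ := pow_mem_filtration hS₂ (p - 1)
  have hexp : scaffoldOp₂ p S ^ (p - 1) * scaffoldOp₁ p μ S ^ p =
      scaffoldOp₂ p S ^ p + scaffoldOp₂ p S ^ (p - 1) * (S ^ p * (E - 1) ^ p) +
        scaffoldOp₂ p S ^ (p - 1) *
          ((S * E - 1) ^ p - (S ^ p - 1) - S ^ p * (E - 1) ^ p) := by
    rw [← pow_sub_one_mul hp.ne_zero (scaffoldOp₂ p S), ← mul_add, ← mul_add]
    congr 1
    rw [scaffoldOp₁, ← hE, scaffoldOp₂]
    abel
  rw [hexp]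
  refine add_mem (add_mem (hA (by linarith) hZp) (hA ?_ (SetLike.mul_mem_graded hZ hSp)))
    (hA ?_ (SetLike.mul_mem_graded hZ hrem))
  all_goals rw [hp1]; nlinarith

theorem scaffoldOp₂_pow_mul_scaffoldOp₁_pow_mem_of_overflow (hp : p.Prime) (hA : Antitone A)
    (hpe : (p : R) ∈ A e) (hb₁ : 0 < b₁) (hb₂ : p ^ 2 * b₁ ≤ b₂)
    (hbig : 0 < e - (p + 1) * b₂ + (p - 1) * b₁) {S : R}
    (hc : ∀ i < p, algebraMap F R (Ring.choose μ i) ∈ A (i * (b₁ - b₂)))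
    (hS : S - 1 ∈ A b₁) (hS₂ : scaffoldOp₂ p S ∈ A b₂) (hord : S ^ p ^ 2 = 1) {q s : ℕ}
    (hs : s + 2 ≤ 2 * p) (hqs : p ≤ q ∨ q = p - 1 ∧ p ≤ s) :
    scaffoldOp₂ p S ^ q * scaffoldOp₁ p μ S ^ s ∈ A (q * b₂ + s * p * b₁ + b₁ + 1) := by
  have hp2 : (2 : ℤ) ≤ p := by exact_mod_cast hp.two_le
  have hs' : (s : ℤ) + 2 ≤ 2 * p := by exact_mod_cast hs
  have hb₂0 : 0 ≤ b₂ := le_trans (by positivity) hb₂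
  have hΨ₁ := scaffoldOp₁_mem hA hp.pos hb₁.le hc hS hS₂
  have hsb : (s : ℤ) * ((p - 1) * b₁) ≤ (2 * p - 2) * ((p - 1) * b₁) :=
    mul_le_mul_of_nonneg_right (by linarith) (mul_nonneg (by linarith) hb₁.le)
  rcases hqs with hq | ⟨rfl, hps⟩
  · obtain ⟨q, rfl⟩ := Nat.exists_eq_add_of_le hq
    rw [pow_add]
    refine hA ?_ (SetLike.mul_mem_graded (SetLike.mul_mem_graded
      (scaffoldOp₂_pow_mem hp hA hpe hb₂0 hS₂ hord) (pow_mem_filtration hS₂ q))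
      (pow_mem_filtration hΨ₁ s))
    push_cast
    nlinarith
  · obtain ⟨s, rfl⟩ := Nat.exists_eq_add_of_le hps
    rw [pow_add, ← mul_assoc]
    refine hA ?_ (SetLike.mul_mem_graded
      (scaffoldOp₂_pow_mul_scaffoldOp₁_pow_mem hp hA hpe hb₁.le hb₂0 hc hS hS₂ hord)
      (pow_mem_filtration hΨ₁ s))
    push_cast [hp.one_le] at hsb ⊢
    nlinarith

theorem scaffoldMonomial_mul_mem (hp : p.Prime) (hA : Antitone A)
    (hpe : (p : R) ∈ A e) (hb₁ : 0 < b₁) (hb₂ : p ^ 2 * b₁ ≤ b₂)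
    (hbig : 0 < e - (p + 1) * b₂ + (p - 1) * b₁) {S : R}
    (hc : ∀ i < p, algebraMap F R (Ring.choose μ i) ∈ A (i * (b₁ - b₂)))
    (hS : S - 1 ∈ A b₁) (hS₂ : scaffoldOp₂ p S ∈ A b₂) (hord : S ^ p ^ 2 = 1) {i j : ℕ}
    (hij : p ^ 2 ≤ i + j) :
    scaffoldMonomial p μ S i * scaffoldMonomial p μ S j ∈
      A (scaffoldExp p b₁ b₂ i + scaffoldExp p b₁ b₂ j - 2 * b₂ + b₁ + 1) := by
  have hi := Nat.mod_lt i hp.pos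
  have hj := Nat.mod_lt j hp.pos
  rw [scaffoldMonomial_mul]
  convert scaffoldOp₂_pow_mul_scaffoldOp₁_pow_mem_of_overflow hp hA hpe hb₁ hb₂ hbig hc hS hS₂ hord
    (by omega) (le_digit_sum_of_sq_le_add hp.pos hij) using 2
  simp only [scaffoldExp]
  push_cast
  ring

end Scaffold

namespace IsDiscVal

section Uniformizer

variable {F K : Type*} [Field F] [Field K] [Algebra F K] {v : K → ℤ} {hv : IsDiscVal v}
  {N : ℤ} {π : F}

theorem map_algebraMap_zpow (hv : IsDiscVal v) (hπ0 : π ≠ 0) (hπ : v (algebraMap F K π) = N)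
    (n : ℤ) : v (algebraMap F K (π ^ n)) = N * n := by
  rw [map_zpow₀, hv.map_zpow (by simpa using hπ0), hπ, mul_comm]

theorem algebraMap_zpow_ediv_mul_mem (hπ0 : π ≠ 0) (hπ : v (algebraMap F K π) = N)
    {m : ℤ} {x : K} (hx : x ∈ hv.fracIdeal (m % N)) :
    algebraMap F K (π ^ (m / N)) * x ∈ hv.fracIdeal m := by
  simpa only [map_algebraMap_zpow hv hπ0 hπ, Int.mul_ediv_add_emod] using
    SetLike.mul_mem_graded (mem_fracIdeal_self (hv := hv) (algebraMap F K (π ^ (m / N)))) hx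

theorem algebraMap_choose_mem_raising [CharZero F] [CharZero K] {p : ℕ} (hp : p.Prime)
    (hpv : (p : K) ∈ hv.fracIdeal 1) {n : ℤ} (hn : n ≤ 0) {x : F}
    (hx : algebraMap F K x ∈ hv.fracIdeal n) {i : ℕ} (hi : i < p) :
    algebraMap F (Module.End F K) (Ring.choose x i) ∈ raising F hv.fracIdeal (i * n) := by
  refine algebraMap_mem_raising ?_
  rw [Ring.map_choose]
  exact choose_mem_fracIdeal hp hpv hn hx hi

theorem algebraMap_zpow_mul_apply_mem (hπ0 : π ≠ 0) (hπ : v (algebraMap F K π) = N)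
    {T U : Module.End F K} {t : ℤ} (hTU : T * U ∈ raising F hv.fracIdeal t) {n : ℤ} {x : K}
    (hx : x ∈ hv.fracIdeal n) (i j : ℤ) :
    algebraMap F K (π ^ i) * T (algebraMap F K (π ^ j) * U x) ∈
      hv.fracIdeal (N * i + (N * j + (n + t))) := by
  rw [← Algebra.smul_def (π ^ j), map_smul, Algebra.smul_def, ← Module.End.mul_apply,
    ← map_algebraMap_zpow hv hπ0 hπ, ← map_algebraMap_zpow hv hπ0 hπ]
  exact SetLike.mul_mem_graded (mem_fracIdeal_self _)
    (SetLike.mul_mem_graded (mem_fracIdeal_self _) (hTU n x hx))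

theorem scaffoldMonomial_apply_mem_of_overflow [CharZero F] [CharZero K] {p : ℕ} (hp : p.Prime)
    {b₁ b₂ e : ℤ} (hpe : (p : K) ∈ hv.fracIdeal e) (hb₁ : 0 < b₁) (hb₂ : p ^ 2 * b₁ ≤ b₂)
    (hmod : b₂ % p ^ 2 ≤ b₁) (hbig : 0 < e - (p + 1) * b₂ + (p - 1) * b₁) {μ : F}
    (hμ : algebraMap F K μ ∈ hv.fracIdeal (b₁ - b₂)) {S : Module.End F K}
    (hS : S - 1 ∈ raising F hv.fracIdeal b₁) (hS₂ : scaffoldOp₂ p S ∈ raising F hv.fracIdeal b₂)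
    (hord : S ^ p ^ 2 = 1) (hπ0 : π ≠ 0) (hπ : v (algebraMap F K π) = p ^ 2) {ρ : K}
    (hρ : ρ ∈ hv.fracIdeal (b₂ % p ^ 2)) {i j : ℕ} (hij : p ^ 2 ≤ i + j) :
    algebraMap F K (π ^ (scaffoldFloor p b₁ b₂ 0 - scaffoldFloor p b₁ b₂ i)) *
      scaffoldMonomial p μ S i (algebraMap F K (π ^ (-scaffoldFloor p b₁ b₂ j)) *
        scaffoldMonomial p μ S j (algebraMap F K (π ^ scaffoldFloor p b₁ b₂ 0) * ρ)) ∈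
      hv.fracIdeal 1 := by
  have hp2 : (2 : ℤ) ≤ p := by exact_mod_cast hp.two_le
  have hb₁b₂ : b₁ ≤ b₂ := (le_mul_of_one_le_left hb₁.le (one_le_pow₀ (by linarith))).trans hb₂
  have hmul := scaffoldMonomial_mul_mem hp (raising_antitone fracIdeal_antitone)
    (natCast_mem_raising hpe) hb₁ hb₂ hbig
    (fun k => algebraMap_choose_mem_raising hp (fracIdeal_antitone (by nlinarith) hpe)
      (by linarith) hμ) hS hS₂ hord hij
  have hρ' : algebraMap F K (π ^ scaffoldFloor p b₁ b₂ 0) * ρ ∈ hv.fracIdeal b₂ := by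
    simpa [scaffoldFloor, scaffoldExp] using algebraMap_zpow_ediv_mul_mem hπ0 hπ hρ
  refine fracIdeal_antitone ?_ (algebraMap_zpow_mul_apply_mem hπ0 hπ hmul hρ' _ _)
  have hd₀ : p ^ 2 * scaffoldFloor p b₁ b₂ 0 + b₂ % p ^ 2 = b₂ := by
    simpa [scaffoldFloor, scaffoldExp] using Int.mul_ediv_add_emod b₂ (p ^ 2)
  linarith [sq_mul_scaffoldFloor_le hp.pos b₁ b₂ i, sq_mul_scaffoldFloor_le hp.pos b₁ b₂ j]

end Uniformizer

end IsDiscVal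

/-- Proposition 4.2: if `p²e₀ − (p+1)b₂ + (p−1)b₁ > 0` then
`π₀^{d₀−d_j}·Ψ^{(j)}·ρ_r ∈ 𝔐₂` whenever `0 ≤ r, j < p²` and `r + j ≥ p²`. -/
theorem statement15
    (p : ℕ) (hp : p.Prime)
    (K0 K2 : Type*) [Field K0] [Field K2] [CharZero K0] [CharZero K2]
    [Algebra K0 K2] [IsGalois K0 K2] [FiniteDimensional K0 K2]
    (hdeg : Module.finrank K0 K2 = p ^ 2)
    (hcyc : IsCyclic (K2 ≃ₐ[K0] K2))
    (v0 : K0 → ℤ) (v2 : K2 → ℤ)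
    (hv0 : IsDiscVal v0) (hv2 : IsDiscVal v2)
    (e0 : ℤ) (he0 : e0 = v0 (p : K0)) (he0pos : 1 ≤ e0)
    (hram : ∀ x : K0, x ≠ 0 → v2 (algebraMap K0 K2 x) = (p : ℤ) ^ 2 * v0 x)
    (a1 μ a2 : K0) (ha1 : a1 ≠ 0) (hμ0 : μ ≠ 0)
    (hwitt : ∀ y : K0, y ^ p - y ≠ a1)
    (hnd : ¬ ((p : ℤ) ∣ v0 a1))
    (hneg : v0 a1 < 0)
    (hbd : -((p : ℤ) * e0) < ((p : ℤ) ^ 2 - 1) * v0 a1)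
    (m : ℤ) (hm : m = -v0 μ) (hmpos : 0 < m)
    (hmu1 : (p : ℤ) ^ 2 * (p - 1) * m - (2 * p * (p - 1) + 1) * v0 a1 < (p : ℤ) ^ 2 * e0)
    (hmu2 : -(((p : ℤ) ^ 2 - 1) * v0 a1) < (p : ℤ) ^ 2 * m)
    (ha2 : a2 = μ ^ p * a1)
    (x1 x2 : K2)
    (hx1 : x1 ^ p - x1 = algebraMap K0 K2 a1)
    (hx2 : x2 ^ p - x2 = algebraMap K0 K2 a2 +
      (x1 ^ p + (algebraMap K0 K2 a1) ^ p - (x1 + algebraMap K0 K2 a1) ^ p) / (p : K2))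
    (hgen : Algebra.adjoin K0 {x1, x2} = ⊤)
    (b1 b2 : ℤ) (hb1 : b1 = -v0 a1) (hb2 : b2 = (p : ℤ) ^ 2 * m + b1)
    (σ1 : K2 ≃ₐ[K0] K2) (ε δ' : K2)
    (hσ1x1 : σ1 x1 = x1 + 1 + ε)
    (hε : ε ≠ 0) (hεv : v2 ε = (p : ℤ) ^ 2 * e0 - p * (p - 1) * b1)
    (hσ1x2 : σ1 x2 = x2 + (x1 ^ p + 1 - (x1 + 1) ^ p) / (p : K2) + δ')
    (hδ' : δ' = 0 ∨ 0 < v2 δ')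
    (Ψ1 Ψ2 : Module.End K0 K2)
    (hΨ2 : Ψ2 = ((σ1 ^ p).toLinearMap : Module.End K0 K2) - 1)
    (hΨ1 : Ψ1 = (σ1.toLinearMap : Module.End K0 K2) *
      (∑ i ∈ Finset.range p,
        ((∏ k ∈ Finset.range i, (μ - (k : K0))) / (Nat.factorial i : K0)) • Ψ2 ^ i) - 1)
    (π0 : K0) (hπ0 : π0 ≠ 0) (hπ0v : v0 π0 = 1)
    (ρ0 : K2) (hρ0 : ρ0 ≠ 0) (hρ0v : v2 ρ0 = b2 % (p : ℤ) ^ 2)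
    (d : ℕ → ℤ)
    (hd : ∀ a : ℕ, a < p ^ 2 →
      d a = Int.fdiv ((1 + ((a / p : ℕ) : ℤ)) * b2 + ((a % p : ℕ) : ℤ) * (p : ℤ) * b1)
        ((p : ℤ) ^ 2))
    (Ψf : ℕ → Module.End K0 K2)
    (hΨf : ∀ a : ℕ, Ψf a = if a < p ^ 2 then Ψ2 ^ (a / p) * Ψ1 ^ (a % p) else 0)
    (ρ : K2) (hρ : ρ = algebraMap K0 K2 (π0 ^ d 0) * ρ0)
    (ρf : ℕ → K2) (hρf : ∀ a : ℕ, ρf a = algebraMap K0 K2 (π0 ^ (-d a)) * Ψf a ρ)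
    (hbig : 0 < (p : ℤ) ^ 2 * e0 - (p + 1) * b2 + (p - 1) * b1) :
    ∀ j r : ℕ, j < p ^ 2 → r < p ^ 2 → p ^ 2 ≤ r + j →
      (algebraMap K0 K2 (π0 ^ (d 0 - d j)) * Ψf j (ρf r) = 0 ∨
        1 ≤ v2 (algebraMap K0 K2 (π0 ^ (d 0 - d j)) * Ψf j (ρf r))) := by
  intro j r hj hr hjr
  have hb₁ : 0 < b1 := by linarith
  have hp0 : (p : K0) ≠ 0 := by exact_mod_cast hp.ne_zero
  have hve : v2 (p : K2) = p ^ 2 * e0 := by rw [he0, ← hram _ hp0, map_natCast]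
  have hvμ : v2 (algebraMap K0 K2 μ) = b1 - b2 := by rw [hram _ hμ0, hb2, hm]; ring
  rw [wittD_eq_div hp, ha2, map_mul, map_pow] at hx2
  have hσ1x2' : σ1 x2 = x2 + wittD p x1 1 + δ' := by rw [hσ1x2, ← wittD_eq_div hp, one_pow]
  obtain ⟨hS, hS₂⟩ := IsDiscVal.sub_one_mem_raising_of_wittVector (hv := hv2) (k := b2 - b1)
    hp hdeg (fun c hc => Dvd.intro _ (hram c hc).symm) hve hb₁ (by rwa [hb1, dvd_neg])
    (by rw [hb1]; nlinarith) (by rw [hb2, hb1]; linarith) ha1 (by rw [hram _ ha1, hb1]; ring) hμ0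
    (by rw [hvμ]; ring) hx1 hx2 hσ1x1 (Or.inr (by rw [hεv]; linarith)) hσ1x2'
    (hδ'.imp_right le_of_lt)
  rw [sub_add_cancel] at hS₂
  have hmod : b2 % (p : ℤ) ^ 2 ≤ b1 := by
    rw [hb2, Int.mul_add_emod_self_left, Int.emod_def]
    exact sub_le_self _ (mul_nonneg (by positivity) (Int.ediv_nonneg hb₁.le (by positivity)))
  have hΨ : ∀ a < p ^ 2, Ψf a = scaffoldMonomial p μ σ1.toLinearMap a := fun a ha => by
    simp only [hΨf, if_pos ha, hΨ1, hΨ2, AlgEquiv.pow_toLinearMap, scaffoldMonomial, scaffoldOp₁,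
      scaffoldOp₂, truncPow, choose_eq_prod_div_factorial]
  have hd' : ∀ a < p ^ 2, d a = scaffoldFloor p b1 b2 a := fun a ha =>
    (hd a ha).trans (Int.fdiv_eq_ediv_of_nonneg _ (by positivity))
  rw [hρf, hρ, hΨ j hj, hΨ r hr, hd' 0 (pow_pos hp.pos 2), hd' j hj, hd' r hr]
  exact IsDiscVal.scaffoldMonomial_apply_mem_of_overflow (hv := hv2) hp (Or.inr hve.ge) hb₁
    (by rw [hb2, hb1]; linarith) hmod hbig (Or.inr hvμ.ge) hS hS₂
    (hdeg ▸ toLinearMap_pow_finrank_eq_one σ1) hπ0 (by rw [hram _ hπ0, hπ0v, mul_one])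
    (Or.inr hρ0v.ge) (add_comm r j ▸ hjr)
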